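/- Let φ : ℝ/ℤ → ℝ be a continuous function that is constant on a nondegenerate arc, i.e. there exist real numbers a < b with b − a < 1 and a constant c such that φ(π(t)) = c for all t ∈ [a, b]. Let ψ : ℝ/ℤ → ℝ be a Morse measuring function. Then there is no homeomorphism f : ℝ/ℤ → ℝ/ℤ with ψ(f(x)) = φ(x) for all x ∈ ℝ/ℤ; in particular no optimal homeomorphism between (ℝ/ℤ, φ) and (ℝ/ℤ, ψ) exists when their natural pseudo-distance is 0. -/

import Mathlib

open Set

/-- If `φ : ℝ/ℤ → ℝ` is continuous and constant on a nondegenerate arc, and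
`ψ : ℝ/ℤ → ℝ` is a Morse measuring function, then there is no homeomorphism
`f` of the circle with `ψ ∘ f = φ`; in particular no optimal homeomorphism
between `(ℝ/ℤ, φ)` and `(ℝ/ℤ, ψ)` exists when their natural pseudo-distance
is `0`. -/
theorem no_optimal_homeomorphism_of_constant_on_arc
    (φ ψ : AddCircle (1 : ℝ) → ℝ) (hφ : Continuous φ)
    (a b c : ℝ) (hab : a < b) (hlen : b - a < 1)
    (hconst : ∀ t ∈ Icc a b, φ (t : AddCircle (1 : ℝ)) = c)
    (hψC : ContDiff ℝ 2 (fun t : ℝ => ψ (t : AddCircle (1 : ℝ))))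
    (hψMorse : ∀ t : ℝ, deriv (fun s : ℝ => ψ (s : AddCircle (1 : ℝ))) t ≠ 0 ∨
      deriv (deriv (fun s : ℝ => ψ (s : AddCircle (1 : ℝ)))) t ≠ 0) :
    ¬ ∃ f : AddCircle (1 : ℝ) ≃ₜ AddCircle (1 : ℝ), ∀ x, ψ (f x) = φ x := by
  rintro ⟨f, hf⟩
  have hU : IsOpen ((fun t : ℝ => (t : AddCircle (1 : ℝ))) '' Ioo a b) :=
    QuotientAddGroup.isOpenMap_coe _ isOpen_Ioo
  have hV : IsOpen ((fun t : ℝ => f.symm (t : AddCircle (1 : ℝ))) ⁻¹'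
      ((fun t : ℝ => (t : AddCircle (1 : ℝ))) '' Ioo a b)) :=
    hU.preimage (f.symm.continuous.comp (AddCircle.continuous_mk' 1))
  obtain ⟨s, hs⟩ := nonempty_Ioo.mpr hab
  obtain ⟨t, ht⟩ := QuotientAddGroup.mk_surjective (f (s : AddCircle (1 : ℝ)))
  have htV : t ∈ ((fun t : ℝ => f.symm (t : AddCircle (1 : ℝ))) ⁻¹'
      ((fun t : ℝ => (t : AddCircle (1 : ℝ))) '' Ioo a b)) :=
    ⟨s, hs, ((f.symm_apply_eq).mpr ht).symm⟩
  have hg : (fun s : ℝ => ψ (s : AddCircle (1 : ℝ))) =ᶠ[nhds t] fun _ => c := by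
    filter_upwards [hV.mem_nhds htV] with u hu
    obtain ⟨v, hv, hvu⟩ := hu
    beta_reduce at hvu
    have h1 := hf (f.symm (u : AddCircle (1 : ℝ)))
    rw [f.apply_symm_apply] at h1
    rw [h1, ← hvu]
    exact hconst v (Ioo_subset_Icc_self hv)
  have h1 := hg.deriv
  have h2 := h1.deriv.eq_of_nhds
  have h1 := h1.eq_of_nhds
  rcases hψMorse t with h | h
  · exact h (by simpa using h1)
  · exact h (by simpa using h2)
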